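/- (Summability of the bad-set volumes under convergence of the integral) Let ψ = (ψ_p)_{p∈S} be a collection of approximating functions and assume ∫_{ℚ_S^n} ∏_{p∈S} ψ_p(‖y‖_p^n) dy < ∞. For each nonzero q ∈ ℤ_S^n define 𝒜_q ⊆ Mat_{m,n}([0,1) × ∏_{p∈S_f} ℤ_p) as the set of A = (A_p)_{p∈S} for which there exists p⃗ ∈ ℤ_S^m with ‖A_p q + p⃗‖_p^m ≤ ψ_p(‖q‖_p^n) for all p ∈ S. Then ∑_{q ∈ ℤ_S^n ∖ {0}} vol(𝒜_q) < ∞, where vol is the restriction of the Haar measure on Mat_{m,n}(ℚ_S) to Mat_{m,n}([0,1) × ∏_{p∈S_f} ℤ_p). -/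

import Mathlib

open MeasureTheory Matrix

noncomputable section

/-- `z` belongs to the ring of `S`-integers `ℤ_S = ℤ[1/P]`,
where `P` is the product of the finite primes in `S`. -/
def IsZS (P : ℕ) (z : ℚ) : Prop := ∃ (a : ℤ) (k : ℕ), z = (a : ℚ) / (P : ℚ) ^ k

/-- A collection of approximating functions `ψ = (ψ_p)_{p ∈ S}`:
each `ψ_p : ℝ_{>0} → ℝ_{>0}` is non-increasing and `≡ 1` on `(0,1]`
(we extend by `1` on `t ≤ 1`); moreover for each finite place `p`,
`ψ_p` is constant on `{p^{kn}, …, p^{kn+n-1}}` for every `k ∈ ℤ` and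
takes values in `p^{mℤ}` on `p^ℤ`. -/
structure ApproxFamily (m n s : ℕ) (p : Fin s → ℕ) : Type where
  psiR : ℝ → ℝ
  psiP : Fin s → ℝ → ℝ
  posR : ∀ t, 0 < psiR t
  antiR : ∀ ⦃t₁ t₂ : ℝ⦄, 0 < t₁ → t₁ ≤ t₂ → psiR t₂ ≤ psiR t₁
  oneR : ∀ ⦃t : ℝ⦄, t ≤ 1 → psiR t = 1
  posP : ∀ i t, 0 < psiP i t
  antiP : ∀ i ⦃t₁ t₂ : ℝ⦄, 0 < t₁ → t₁ ≤ t₂ → psiP i t₂ ≤ psiP i t₁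
  oneP : ∀ i ⦃t : ℝ⦄, t ≤ 1 → psiP i t = 1
  constP : ∀ i (k : ℤ) (j : ℕ), j < n →
    psiP i ((p i : ℝ) ^ (k * n + j : ℤ)) = psiP i ((p i : ℝ) ^ (k * n : ℤ))
  valsP : ∀ i (k : ℤ), ∃ l : ℤ, psiP i ((p i : ℝ) ^ k) = (p i : ℝ) ^ (m * l : ℤ)

/-- The real components of the diagonal embedding of a rational vector. -/
def ratR {k : ℕ} (q : Fin k → ℚ) : Fin k → ℝ := fun j => (q j : ℝ)

/-- The `p i`-adic components of the diagonal embedding of a rational vector. -/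
def ratP {s : ℕ} (p : Fin s → ℕ) [∀ i, Fact (p i).Prime] {k : ℕ} (i : Fin s)
    (q : Fin k → ℚ) : Fin k → ℚ_[p i] := fun j => (q j : ℚ_[p i])

/-- The region `E_f(T) ⊆ ℚ_S^m × ℚ_S^n` cut out by `‖x‖_p^m ≤ f_p(‖y‖_p^n)` and
`‖y‖_p^n ≤ T_p` for all `p ∈ S` (product coordinates). -/
def Eprod (m n : ℕ) {s : ℕ} (p : Fin s → ℕ) [∀ i, Fact (p i).Prime]
    (fR : ℝ → ℝ) (fP : Fin s → ℝ → ℝ) (TR : ℝ) (TP : Fin s → ℝ) :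
    Set (((Fin m → ℝ) × ∀ i, Fin m → ℚ_[p i]) × ((Fin n → ℝ) × ∀ i, Fin n → ℚ_[p i])) :=
  {xy | ‖xy.1.1‖ ^ m ≤ fR (‖xy.2.1‖ ^ n) ∧ ‖xy.2.1‖ ^ n ≤ TR ∧
      ∀ i, ‖xy.1.2 i‖ ^ m ≤ fP i (‖xy.2.2 i‖ ^ n) ∧ ‖xy.2.2 i‖ ^ n ≤ TP i}

/-- The region `E_f(T) ⊆ ℚ_S^{m+n}`, where the first `m` coordinates play the role of
`x` and the last `n` coordinates the role of `y`. -/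
def Efull (m n : ℕ) {s : ℕ} (p : Fin s → ℕ) [∀ i, Fact (p i).Prime]
    (fR : ℝ → ℝ) (fP : Fin s → ℝ → ℝ) (TR : ℝ) (TP : Fin s → ℝ) :
    Set ((Fin (m + n) → ℝ) × ∀ i, Fin (m + n) → ℚ_[p i]) :=
  {v | ‖fun a : Fin m => v.1 (Fin.castAdd n a)‖ ^ m
        ≤ fR (‖fun b : Fin n => v.1 (Fin.natAdd m b)‖ ^ n) ∧
      ‖fun b : Fin n => v.1 (Fin.natAdd m b)‖ ^ n ≤ TR ∧
      ∀ i, ‖fun a : Fin m => v.2 i (Fin.castAdd n a)‖ ^ m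
            ≤ fP i (‖fun b : Fin n => v.2 i (Fin.natAdd m b)‖ ^ n) ∧
          ‖fun b : Fin n => v.2 i (Fin.natAdd m b)‖ ^ n ≤ TP i}

/-- The operator norm of a real matrix acting on sup-normed spaces. -/
def opNorm {k l : ℕ} (M : Matrix (Fin k) (Fin l) ℝ) : ℝ :=
  ‖LinearMap.toContinuousLinearMap M.mulVecLin‖

/-- An element of the group `𝐇 = ∏_{p ∈ S} H_p` of block lower-triangular matrices,
given by its blocks at each place. -/
structure HElem (m n : ℕ) (s : ℕ) (p : Fin s → ℕ) [∀ i, Fact (p i).Prime] : Type where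
  aR : Matrix (Fin m) (Fin m) ℝ
  bR : Matrix (Fin n) (Fin m) ℝ
  cR : Matrix (Fin n) (Fin n) ℝ
  aP : ∀ i, Matrix (Fin m) (Fin m) ℚ_[p i]
  bP : ∀ i, Matrix (Fin n) (Fin m) ℚ_[p i]
  cP : ∀ i, Matrix (Fin n) (Fin n) ℚ_[p i]

/-- The action of an element of `𝐇` on `ℚ_S^m × ℚ_S^n`:
`h·(x, y) = (α x, β x + γ y)` at each place. -/
def HElem.act {m n s : ℕ} {p : Fin s → ℕ} [∀ i, Fact (p i).Prime] (h : HElem m n s p)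
    (xy : ((Fin m → ℝ) × ∀ i, Fin m → ℚ_[p i]) × ((Fin n → ℝ) × ∀ i, Fin n → ℚ_[p i])) :
    ((Fin m → ℝ) × ∀ i, Fin m → ℚ_[p i]) × ((Fin n → ℝ) × ∀ i, Fin n → ℚ_[p i]) :=
  ((h.aR.mulVec xy.1.1, fun i => (h.aP i).mulVec (xy.1.2 i)),
   (h.bR.mulVec xy.1.1 + h.cR.mulVec xy.2.1,
    fun i => (h.bP i).mulVec (xy.1.2 i) + (h.cP i).mulVec (xy.2.2 i)))

/-- Membership in `H̃_{∞,ε}`: operator norm bounds on the blocks. -/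
def inHtilde (m n : ℕ) (ε : ℝ) (α : Matrix (Fin m) (Fin m) ℝ) (β : Matrix (Fin n) (Fin m) ℝ)
    (γ : Matrix (Fin n) (Fin n) ℝ) : Prop :=
  opNorm α ^ m ≤ 1 + ε ∧ opNorm γ ^ n ≤ 1 + ε / 2 ∧ opNorm β ≤ ε / (4 * n)

/-- `h ∈ (H̃_{∞,ε} ∩ H̃_{∞,ε}⁻¹) × ∏_{p ∈ S_f} H_p(ℤ_p)`. -/
def HElem.isAdmissible {m n s : ℕ} {p : Fin s → ℕ} [∀ i, Fact (p i).Prime]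
    (h : HElem m n s p) (ε : ℝ) : Prop :=
  IsUnit h.aR.det ∧ IsUnit h.cR.det ∧
  inHtilde m n ε h.aR h.bR h.cR ∧
  inHtilde m n ε h.aR⁻¹ (-(h.cR⁻¹ * h.bR * h.aR⁻¹)) h.cR⁻¹ ∧
  ∀ i, ((∀ a b, ‖h.aP i a b‖ ≤ 1) ∧ ‖(h.aP i).det‖ = 1) ∧
      ((∀ a b, ‖h.cP i a b‖ ≤ 1) ∧ ‖(h.cP i).det‖ = 1) ∧
      (∀ a b, ‖h.bP i a b‖ ≤ 1)

end

instance prodMeasurableAdd₂ {G H : Type*} [MeasurableSpace G] [MeasurableSpace H] [Add G] [Add H]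
    [MeasurableAdd₂ G] [MeasurableAdd₂ H] : MeasurableAdd₂ (G × H) where
  measurable_add := by
    refine Measurable.prodMk ?_ ?_
    · exact (measurable_fst.comp measurable_fst).add (measurable_fst.comp measurable_snd)
    · exact (measurable_snd.comp measurable_fst).add (measurable_snd.comp measurable_snd)

instance prodMeasurableNeg {G H : Type*} [MeasurableSpace G] [MeasurableSpace H] [Neg G] [Neg H]
    [MeasurableNeg G] [MeasurableNeg H] : MeasurableNeg (G × H) where
  measurable_neg := measurable_fst.neg.prodMk measurable_snd.neg

/-- Translates of a set `F` by distinct points of `Γ` pack, so a symmetric set `B` meets `F`,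
modulo `Γ`, in measure at most that of `B`. -/
theorem measure_inter_add_subgroup_le {H : Type*} [AddCommGroup H] [MeasurableSpace H]
    [MeasurableAdd₂ H] [MeasurableNeg H] {ν : Measure H} [ν.IsAddLeftInvariant]
    {Γ : AddSubgroup H} [Countable Γ] {F B : Set H} (hF : MeasurableSet F) (hB : MeasurableSet B)
    (hBneg : ∀ h ∈ B, -h ∈ B)
    (hpack : ∀ x ∈ F, ∀ y ∈ F, x - y ∈ Γ → x = y) (x : H) :
    ν (F ∩ {c | ∃ γ ∈ Γ, x - c - γ ∈ B}) ≤ ν B := by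
  have hsub : F ∩ {c | ∃ γ ∈ Γ, x - c - γ ∈ B} ⊆
      ⋃ γ : Γ, (fun c => (γ : H) + c) ⁻¹' ({c | c - γ ∈ F} ∩ {c | c - x ∈ B}) := by
    rintro c ⟨hc, γ, hγ, hmem⟩
    refine Set.mem_iUnion.2 ⟨⟨γ, hγ⟩, ?_, ?_⟩
    · simpa using hc
    · have := hBneg _ hmem
      simp only [Set.mem_ofPred_eq]
      convert this using 1
      abel
  calc ν (F ∩ {c | ∃ γ ∈ Γ, x - c - γ ∈ B})
      ≤ ∑' γ : Γ, ν ((fun c => (γ : H) + c) ⁻¹' ({c | c - γ ∈ F} ∩ {c | c - x ∈ B})) :=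
        (measure_mono hsub).trans (measure_iUnion_le _)
    _ = ∑' γ : Γ, ν ({c | c - γ ∈ F} ∩ {c | c - x ∈ B}) := by
        simp only [measure_preimage_add]
    _ ≤ ν (⋃ γ : Γ, {c | c - γ ∈ F} ∩ {c | c - x ∈ B}) := by
        refine tsum_meas_le_meas_iUnion_of_disjoint _ (fun γ => ?_) ?_
        · exact (measurable_id.sub_const _ hF).inter (measurable_id.sub_const _ hB)
        · intro γ δ hne
          refine Set.disjoint_left.2 fun c hc hd => hne ?_
          have := hpack _ hc.1 _ hd.1 (by
            have : c - γ - (c - δ) = ((δ - γ : Γ) : H) := by push_cast; abel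
            rw [this]; exact (δ - γ).2)
          exact Subtype.ext (sub_right_injective this)
    _ ≤ ν {c | c - x ∈ B} := measure_mono (Set.iUnion_subset fun _ => Set.inter_subset_right)
    _ = ν B := by
        have : {c | c - x ∈ B} = (fun c => -x + c) ⁻¹' B := by
          ext c; simp [sub_eq_neg_add]
        rw [this, measure_preimage_add]

open scoped Pointwise in
/-- If a surjective homomorphism `T` maps the lattice `Λ` into `Γ`, then the image mod `Γ` of a
uniformly distributed point mod `Λ` lands in the symmetric set `B` with probability at most
the relative volume of `B`. -/
theorem measure_inter_preimage_mul_le {G H : Type*} [AddCommGroup G] [MeasurableSpace G]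
    [MeasurableAdd₂ G] [MeasurableNeg G] [AddCommGroup H] [MeasurableSpace H] [MeasurableAdd₂ H]
    [MeasurableNeg H] {μ : Measure G} [SFinite μ] [μ.IsAddLeftInvariant] {ν : Measure H}
    [SFinite ν] [ν.IsAddLeftInvariant] {Λ : AddSubgroup G} [Countable Λ] {Γ : AddSubgroup H}
    [Countable Γ] {F : Set G} (hF : IsAddFundamentalDomain Λ F μ)
    {F' B : Set H} (hF' : MeasurableSet F') (hB : MeasurableSet B) (hBneg : ∀ h ∈ B, -h ∈ B)
    (hpack : ∀ x ∈ F', ∀ y ∈ F', x - y ∈ Γ → x = y) (T : G →+ H) (hT : Measurable T)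
    (hsurj : Function.Surjective T) (hmap : ∀ g ∈ Λ, T g ∈ Γ) :
    μ (F ∩ {A | ∃ γ ∈ Γ, T A - γ ∈ B}) * ν F' ≤ μ F * ν B := by
  set E : Set H := {h | ∃ γ ∈ Γ, h - γ ∈ B} with hE
  have hEm : MeasurableSet E := by
    have : E = ⋃ γ : Γ, {h | h - (γ : H) ∈ B} := by ext h; simp [hE]
    rw [this]
    exact MeasurableSet.iUnion fun γ => measurable_id.sub_const _ hB
  have hconst : ∀ c : H, μ (F ∩ {A | T A - c ∈ E}) = μ (F ∩ {A | T A ∈ E}) := by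
    intro c
    obtain ⟨D, rfl⟩ := hsurj c
    have h1 : F ∩ {A | T A - T D ∈ E} = (fun A => -D + A) ⁻¹' ({A | T A ∈ E} ∩ (-D +ᵥ F)) := by
      ext A
      have : -D + A ∈ -D +ᵥ F ↔ A ∈ F := by
        rw [← vadd_eq_add]; exact Set.vadd_mem_vadd_set_iff
      simp only [Set.mem_inter_iff, Set.mem_ofPred_eq, Set.mem_preimage, this, map_add, map_neg,
        sub_eq_neg_add]
      tauto
    rw [h1, measure_preimage_add, Set.inter_comm F]
    refine ((hF.vadd_of_comm (-D)).measure_set_eq hF (hT hEm) fun g => ?_)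
    ext A
    simp only [hE, Set.mem_preimage, Set.mem_ofPred_eq, AddSubgroup.vadd_def, vadd_eq_add, map_add]
    constructor
    · rintro ⟨γ, hγ, h⟩
      refine ⟨γ - T g, Γ.sub_mem hγ (hmap _ g.2), ?_⟩
      convert h using 1; abel
    · rintro ⟨γ, hγ, h⟩
      refine ⟨γ + T g, Γ.add_mem hγ (hmap _ g.2), ?_⟩
      convert h using 1; abel
  have hmeas : MeasurableSet {x : H × G | T x.2 - x.1 ∈ E} :=
    ((hT.comp measurable_snd).sub measurable_fst) hEm
  calc μ (F ∩ {A | T A ∈ E}) * ν F'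
      = ∫⁻ c in F', μ (F ∩ {A | T A - c ∈ E}) ∂ν := by simp [hconst]
    _ = ((ν.restrict F').prod (μ.restrict F)) {x : H × G | T x.2 - x.1 ∈ E} := by
        rw [Measure.prod_apply hmeas]
        refine lintegral_congr fun c => ?_
        rw [Measure.restrict_apply (measurable_prodMk_left hmeas), Set.inter_comm]
        rfl
    _ = ∫⁻ A in F, ν (F' ∩ {c | T A - c ∈ E}) ∂μ := by
        rw [Measure.prod_apply_symm hmeas]
        refine lintegral_congr fun A => ?_
        rw [Measure.restrict_apply (measurable_prodMk_right hmeas), Set.inter_comm]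
        rfl
    _ ≤ ∫⁻ _ in F, ν B ∂μ :=
        lintegral_mono fun A => measure_inter_add_subgroup_le hF' hB hBneg hpack (T A)
    _ = μ F * ν B := by simp [mul_comm]

/-- The ball of radius `p ^ (-k)` in `ℚ_p` has measure at most `p ^ (-k)` times that of the
unit ball. -/
theorem padic_measure_closedBall_mul_le {p : ℕ} [Fact p.Prime] [MeasurableSpace ℚ_[p]]
    [BorelSpace ℚ_[p]] (μ : Measure ℚ_[p]) [μ.IsAddLeftInvariant] (k : ℕ) :
    μ {x | ‖x‖ ≤ (p : ℝ) ^ (-k : ℤ)} * (p : ENNReal) ^ k ≤ μ {x | ‖x‖ ≤ 1} := by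
  have hp : (1 : ℝ) < p := by exact_mod_cast (Fact.out : p.Prime).one_lt
  have hle1 : (p : ℝ) ^ (-k : ℤ) ≤ 1 := zpow_le_one_of_nonpos₀ hp.le (by simp)
  have hmeas : ∀ r : ℝ, MeasurableSet {x : ℚ_[p] | ‖x‖ ≤ r} := fun r =>
    (isClosed_le continuous_norm continuous_const).measurableSet
  calc μ {x | ‖x‖ ≤ (p : ℝ) ^ (-k : ℤ)} * (p : ENNReal) ^ k
      = ∑ j ∈ Finset.range (p ^ k), μ ((fun x => -(j : ℚ_[p]) + x) ⁻¹'
          {x | ‖x‖ ≤ (p : ℝ) ^ (-k : ℤ)}) := by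
        simp only [measure_preimage_add, Finset.sum_const, Finset.card_range, nsmul_eq_mul,
          Nat.cast_pow, mul_comm]
    _ = μ (⋃ j ∈ Finset.range (p ^ k), (fun x => -(j : ℚ_[p]) + x) ⁻¹'
          {x | ‖x‖ ≤ (p : ℝ) ^ (-k : ℤ)}) := by
        refine (measure_biUnion_finset ?_ fun j _ => measurable_const_add _ (hmeas _)).symm
        intro i hi j hj hij
        refine Set.disjoint_left.2 fun x hx hy => hij ?_
        simp only [Set.mem_preimage, Set.mem_ofPred_eq] at hx hy
        have h := (Padic.nonarchimedean (-(i : ℚ_[p]) + x) (-(-(j : ℚ_[p]) + x))).trans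
          (max_le hx (by rwa [norm_neg]))
        have h2 : -(i : ℚ_[p]) + x + -(-(j : ℚ_[p]) + x) = ((j - i : ℤ) : ℚ_[p]) := by
          push_cast; ring
        rw [h2, Padic.norm_int_le_pow_iff_dvd, ← Int.modEq_iff_dvd] at h
        have h3 : i ≡ j [MOD p ^ k] := by
          rw [← Int.natCast_modEq_iff]; exact_mod_cast h
        simp only [Finset.coe_range, Set.mem_Iio] at hi hj
        exact h3.eq_of_lt_of_lt hi hj
    _ ≤ μ {x | ‖x‖ ≤ 1} := by
        refine measure_mono (Set.iUnion₂_subset fun j _ x hx => ?_)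
        simp only [Set.mem_preimage, Set.mem_ofPred_eq] at hx ⊢
        have h := Padic.nonarchimedean (j : ℚ_[p]) (-(j : ℚ_[p]) + x)
        rw [add_neg_cancel_left] at h
        exact h.trans (max_le (by exact_mod_cast Padic.norm_int_le_one (j : ℤ)) (hx.trans hle1))

section SIntegers

variable {s : ℕ} (p : Fin s → ℕ) [∀ i, Fact (p i).Prime]

theorem prod_primes_ne_zero : ((∏ i, p i : ℕ) : ℚ) ≠ 0 :=
  Nat.cast_ne_zero.2 (Finset.prod_ne_zero_iff.2 fun i _ => (Fact.out : (p i).Prime).ne_zero)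

/-- The ring `ℤ_S` of `S`-integers as a subring of `ℚ`. -/
def sIntegers : Subring ℚ where
  carrier := {z | IsZS (∏ i, p i) z}
  zero_mem' := ⟨0, 0, by simp⟩
  one_mem' := ⟨1, 0, by simp⟩
  add_mem' := by
    rintro _ _ ⟨a, k, rfl⟩ ⟨b, l, rfl⟩
    refine ⟨a * (∏ i, p i : ℕ) ^ l + b * (∏ i, p i : ℕ) ^ k, k + l, ?_⟩
    have h := prod_primes_ne_zero p
    rw [div_add_div _ _ (pow_ne_zero _ h) (pow_ne_zero _ h), pow_add]
    congr 1
    simp only [Int.cast_add, Int.cast_mul, Int.cast_pow, Int.cast_natCast]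
    ring
  neg_mem' := by
    rintro _ ⟨a, k, rfl⟩
    exact ⟨-a, k, by push_cast; ring⟩
  mul_mem' := by
    rintro _ _ ⟨a, k, rfl⟩ ⟨b, l, rfl⟩
    refine ⟨a * b, k + l, ?_⟩
    rw [div_mul_div_comm, pow_add, Int.cast_mul]

variable {p}

/-- An `S`-integer which is integral at all finite places of `S` and of absolute value less than
one vanishes. -/
theorem eq_zero_of_mem_sIntegers {z : ℚ} (hz : z ∈ sIntegers p) (habs : |(z : ℝ)| < 1)
    (hnorm : ∀ i, ‖(z : ℚ_[p i])‖ ≤ 1) : z = 0 := by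
  have hden : z.den = 1 := by
    by_contra hne
    obtain ⟨r, hr, hrz⟩ := Nat.exists_prime_and_dvd hne
    obtain ⟨a, k, hak⟩ := hz
    have hdvd : (z.den : ℤ) ∣ ((∏ i, p i : ℕ) : ℤ) ^ k := by
      have h := Rat.den_dvd a (((∏ i, p i : ℕ) : ℤ) ^ k)
      rw [Rat.divInt_eq_div] at h
      simp only [Int.cast_pow, Int.cast_natCast] at h
      rwa [← hak] at h
    have hrP : r ∣ ∏ i, p i :=
      hr.dvd_of_dvd_pow (hrz.trans (by exact_mod_cast hdvd : z.den ∣ (∏ i, p i) ^ k))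
    obtain ⟨i, -, hi⟩ := (Prime.dvd_finsetProd_iff hr.prime _).1 hrP
    obtain rfl := (Nat.prime_dvd_prime_iff_eq hr Fact.out).1 hi
    have hu := PadicInt.isUnit_iff.1 (PadicInt.isUnit_den z (hnorm i))
    have hlt : ‖((z.den : ℕ) : ℚ_[p i])‖ < 1 := Padic.norm_natCast_lt_one_iff.2 hrz
    rw [PadicInt.norm_def] at hu
    push_cast at hu
    exact hlt.ne hu
  have hnum : (z.num : ℚ) = z := (Rat.den_eq_one_iff z).1 hden
  rw [← hnum] at habs ⊢
  have : |z.num| < 1 := by exact_mod_cast habs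
  simp [Int.abs_lt_one_iff.1 this]

/-- Every `p`-adic number differs from some `a / p ^ k` by a `p`-adic integer. -/
theorem padic_exists_norm_sub_div_pow_le_one {p : ℕ} [Fact p.Prime] (x : ℚ_[p]) :
    ∃ (a : ℤ) (k : ℕ), ‖x - ((a / (p : ℚ) ^ k : ℚ) : ℚ_[p])‖ ≤ 1 := by
  have hp : (1 : ℝ) < p := by exact_mod_cast (Fact.out : p.Prime).one_lt
  have hp0 : (p : ℚ_[p]) ≠ 0 := Nat.cast_ne_zero.2 (Fact.out : p.Prime).ne_zero
  obtain ⟨k, hk⟩ := pow_unbounded_of_one_lt ‖x‖ hp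
  have hppos : (0 : ℝ) < (p : ℝ) ^ k := by positivity
  have hy : ‖x * (p : ℚ_[p]) ^ k‖ ≤ 1 := by
    rw [norm_mul, Padic.norm_p_pow, _root_.zpow_neg, zpow_natCast, ← div_eq_mul_inv, div_le_one hppos]
    exact hk.le
  set y : ℤ_[p] := ⟨x * (p : ℚ_[p]) ^ k, hy⟩ with hydef
  refine ⟨(y.appr k : ℤ), k, ?_⟩
  have h := (PadicInt.norm_le_pow_iff_mem_span_pow _ _).2 (PadicInt.appr_spec k y)
  rw [PadicInt.norm_def] at h
  push_cast at h ⊢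
  have h2 : x - (y.appr k : ℚ_[p]) / (p : ℚ_[p]) ^ k =
      ((y : ℚ_[p]) - (y.appr k : ℚ_[p])) / (p : ℚ_[p]) ^ k := by
    rw [sub_div, hydef]
    simp [hp0]
  rw [h2, norm_div, Padic.norm_p_pow]
  exact div_le_one_of_le₀ h (by positivity)

/-- Strong approximation: every point of `ℚ_S` can be moved into `[0,1) × ∏ ℤ_p` by adding an
`S`-integer. -/
theorem exists_sIntegers_add_mem (hpinj : Function.Injective p) (x : ℝ) (y : ∀ i, ℚ_[p i]) :
    ∃ z ∈ sIntegers p, (0 ≤ (z : ℝ) + x ∧ (z : ℝ) + x < 1) ∧ ∀ i, ‖(z : ℚ_[p i]) + y i‖ ≤ 1 := by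
  choose a k hak using fun i => padic_exists_norm_sub_div_pow_le_one (y i)
  have hmem : ∀ i, (a i / (p i : ℚ) ^ k i : ℚ) ∈ sIntegers p := by
    intro i
    refine ⟨a i * (∏ j ∈ Finset.univ.erase i, p j : ℕ) ^ k i, k i, ?_⟩
    rw [← Finset.mul_prod_erase Finset.univ p (Finset.mem_univ i)]
    have h1 : (p i : ℚ) ≠ 0 := Nat.cast_ne_zero.2 (Fact.out : (p i).Prime).ne_zero
    have h2 : ((∏ j ∈ Finset.univ.erase i, p j : ℕ) : ℚ) ≠ 0 := Nat.cast_ne_zero.2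
      (Finset.prod_ne_zero_iff.2 fun i _ => (Fact.out : (p i).Prime).ne_zero)
    generalize (∏ j ∈ Finset.univ.erase i, p j : ℕ) = Q at h2
    push_cast
    field_simp
    ring
  have hoff : ∀ i j, j ≠ i → ‖((a j / (p j : ℚ) ^ k j : ℚ) : ℚ_[p i])‖ ≤ 1 := by
    intro i j hij
    have hunit : ‖(p j : ℚ_[p i])‖ = 1 := Padic.norm_natCast_eq_one_iff.2
      ((Nat.coprime_primes Fact.out Fact.out).2 (hpinj.ne hij.symm))
    push_cast
    rw [norm_div, norm_pow, hunit, one_pow, div_one]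
    exact Padic.norm_int_le_one _
  set r : ℚ := ∑ i, (a i / (p i : ℚ) ^ k i : ℚ) with hr
  refine ⟨-r - ⌊x - r⌋, sub_mem (neg_mem (sum_mem fun i _ => hmem i)) (intCast_mem _ _), ?_, ?_⟩
  · push_cast
    have h1 := Int.floor_le (x - r)
    have h2 := Int.lt_floor_add_one (x - r)
    constructor <;> linarith
  · intro i
    have hsplit : ((-r - ⌊x - r⌋ : ℚ) : ℚ_[p i]) + y i =
        (y i - ((a i / (p i : ℚ) ^ k i : ℚ) : ℚ_[p i])) +
        (-(∑ j ∈ Finset.univ.erase i, ((a j / (p j : ℚ) ^ k j : ℚ) : ℚ_[p i])) +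
          ((-⌊x - r⌋ : ℤ) : ℚ_[p i])) := by
      rw [hr, ← Finset.add_sum_erase Finset.univ _ (Finset.mem_univ i)]
      push_cast
      ring
    rw [hsplit]
    refine (Padic.nonarchimedean _ _).trans (max_le (hak i) ?_)
    refine (Padic.nonarchimedean _ _).trans (max_le ?_ (Padic.norm_int_le_one _))
    rw [norm_neg]
    exact IsUltrametricDist.norm_sum_le_of_forall_le_of_nonneg zero_le_one
      fun j hj => hoff i j (Finset.ne_of_mem_erase hj)

end SIntegers

section Lattices

variable {s : ℕ} (p : Fin s → ℕ) [∀ i, Fact (p i).Prime]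

/-- The diagonal embedding of `ℤ_S^k` into `ℚ_S^k`. -/
noncomputable def diagVec (k : ℕ) :
    (Fin k → sIntegers p) →+ (Fin k → ℝ) × (∀ i, Fin k → ℚ_[p i]) where
  toFun z := (fun a => ((z a : ℚ) : ℝ), fun i a => ((z a : ℚ) : ℚ_[p i]))
  map_zero' := by ext <;> simp
  map_add' z w := by ext <;> simp

/-- The diagonal embedding of `Mat_{m,n}(ℤ_S)` into `Mat_{m,n}(ℚ_S)`. -/
noncomputable def diagMat (m n : ℕ) :
    (Fin m → Fin n → sIntegers p) →+
      (Fin m → Fin n → ℝ) × (∀ i, Fin m → Fin n → ℚ_[p i]) where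
  toFun z := (fun a b => ((z a b : ℚ) : ℝ), fun i a b => ((z a b : ℚ) : ℚ_[p i]))
  map_zero' := by ext <;> simp
  map_add' z w := by ext <;> simp

instance countable_sIntegers : Countable (sIntegers p) := Subtype.countable

instance countable_range_diagVec (k : ℕ) : Countable (diagVec p k).range :=
  (Set.countable_range (diagVec p k)).to_subtype

instance countable_range_diagMat (m n : ℕ) : Countable (diagMat p m n).range :=
  (Set.countable_range (diagMat p m n)).to_subtype

/-- The box `(e + [0,1)^k) × ∏ ℤ_p^k` in `ℚ_S^k`. -/
def boxVec (k : ℕ) (e : Fin k → ℝ) : Set ((Fin k → ℝ) × (∀ i, Fin k → ℚ_[p i])) :=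
  {x | (∀ a, e a ≤ x.1 a ∧ x.1 a < e a + 1) ∧ ∀ i a, ‖x.2 i a‖ ≤ 1}

/-- The box `Mat_{m,n}([0,1) × ∏ ℤ_p)` in `Mat_{m,n}(ℚ_S)`. -/
def boxMat (m n : ℕ) : Set ((Fin m → Fin n → ℝ) × (∀ i, Fin m → Fin n → ℚ_[p i])) :=
  {A | (∀ a b, 0 ≤ A.1 a b ∧ A.1 a b < 1) ∧ ∀ i a b, ‖A.2 i a b‖ ≤ 1}

theorem boxVec_eq (k : ℕ) (e : Fin k → ℝ) :
    boxVec p k e = (Set.univ.pi fun a => Set.Ico (e a) (e a + 1)) ×ˢ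
      (Set.univ.pi fun i => {x : Fin k → ℚ_[p i] | ∀ a, ‖x a‖ ≤ 1}) := by
  ext x; simp [boxVec, Set.mem_pi]

theorem boxMat_eq (m n : ℕ) :
    boxMat p m n = (Set.univ.pi fun _ => Set.univ.pi fun _ => Set.Ico (0 : ℝ) 1) ×ˢ
      (Set.univ.pi fun i => {A : Fin m → Fin n → ℚ_[p i] | ∀ a b, ‖A a b‖ ≤ 1}) := by
  ext x; simp [boxMat, Set.mem_pi]

variable {p}

theorem diagVec_eq_of_mem_boxVec {k : ℕ} {e : Fin k → ℝ}
    {x y : (Fin k → ℝ) × (∀ i, Fin k → ℚ_[p i])} {z : Fin k → sIntegers p}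
    (hx : x ∈ boxVec p k e) (hy : y ∈ boxVec p k e) (hz : diagVec p k z = x - y) : z = 0 := by
  funext a
  refine Subtype.ext (eq_zero_of_mem_sIntegers (z a).2 ?_ fun i => ?_)
  · have h : ((z a : ℚ) : ℝ) = x.1 a - y.1 a := congrFun (congrArg Prod.fst hz) a
    rw [h, abs_lt]
    have h1 := hx.1 a
    have h2 := hy.1 a
    constructor <;> linarith
  · have h : ((z a : ℚ) : ℚ_[p i]) = x.2 i a - y.2 i a :=
      congrFun (congrFun (congrArg Prod.snd hz) i) a
    rw [h, sub_eq_add_neg]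
    exact (Padic.nonarchimedean _ _).trans (max_le (hx.2 i a) (by rw [norm_neg]; exact hy.2 i a))

variable [∀ i, MeasurableSpace ℚ_[p i]]

theorem measure_boxVec {k : ℕ} (e : Fin k → ℝ) (μ : ∀ i, Measure (Fin k → ℚ_[p i]))
    [∀ i, SigmaFinite (μ i)] (hμ : ∀ i, μ i {y | ∀ j, ‖y j‖ ≤ 1} = 1) :
    ((volume : Measure (Fin k → ℝ)).prod (Measure.pi μ)) (boxVec p k e) = 1 := by
  rw [boxVec_eq, Measure.prod_prod, Measure.pi_pi, Real.volume_pi_Ico]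
  simp [hμ]

theorem measure_boxMat {m n : ℕ} (ν : ∀ i, Measure (Fin m → Fin n → ℚ_[p i]))
    [∀ i, SigmaFinite (ν i)] (hν : ∀ i, ν i {A | ∀ a b, ‖A a b‖ ≤ 1} = 1) :
    ((volume : Measure (Fin m → Fin n → ℝ)).prod (Measure.pi ν)) (boxMat p m n) = 1 := by
  rw [boxMat_eq, Measure.prod_prod, Measure.pi_pi, volume_pi_pi]
  simp [hν, volume_pi_pi]

variable [∀ i, BorelSpace ℚ_[p i]]

theorem measurableSet_boxVec (k : ℕ) (e : Fin k → ℝ) : MeasurableSet (boxVec p k e) := by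
  rw [boxVec_eq]
  refine (MeasurableSet.univ_pi fun _ => measurableSet_Ico).prod (MeasurableSet.univ_pi fun i => ?_)
  have h : {x : Fin k → ℚ_[p i] | ∀ a, ‖x a‖ ≤ 1} = ⋂ a, {x | ‖x a‖ ≤ 1} := by ext; simp
  rw [h]
  exact (isClosed_iInter fun a => isClosed_le (by fun_prop) continuous_const).measurableSet

theorem measurableSet_boxMat (m n : ℕ) : MeasurableSet (boxMat p m n) := by
  rw [boxMat_eq]
  refine (MeasurableSet.univ_pi fun _ => MeasurableSet.univ_pi fun _ => measurableSet_Ico).prod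
    (MeasurableSet.univ_pi fun i => ?_)
  have h : {A : Fin m → Fin n → ℚ_[p i] | ∀ a b, ‖A a b‖ ≤ 1} =
      ⋂ a, ⋂ b, {A | ‖A a b‖ ≤ 1} := by ext; simp
  rw [h]
  exact (isClosed_iInter fun a => isClosed_iInter fun b =>
    isClosed_le (by fun_prop) continuous_const).measurableSet

theorem isAddFundamentalDomain_boxMat (hpinj : Function.Injective p) (m n : ℕ)
    (μ : Measure ((Fin m → Fin n → ℝ) × (∀ i, Fin m → Fin n → ℚ_[p i]))) :
    IsAddFundamentalDomain (diagMat p m n).range (boxMat p m n) μ := by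
  refine IsAddFundamentalDomain.mk' (measurableSet_boxMat m n).nullMeasurableSet fun A => ?_
  choose z hz hzR hzP using fun a b =>
    exists_sIntegers_add_mem hpinj (A.1 a b) (fun i => A.2 i a b)
  refine ⟨⟨_, fun a b => ⟨z a b, hz a b⟩, rfl⟩, ⟨fun a b => hzR a b, fun i a b => hzP a b i⟩, ?_⟩
  rintro ⟨_, w, rfl⟩ ⟨hwR, hwP⟩
  refine Subtype.ext (congrArg (diagMat p m n) ?_)
  funext a b
  refine Subtype.ext (sub_eq_zero.1 (eq_zero_of_mem_sIntegers
    (sub_mem (w a b).2 (hz a b)) ?_ fun i => ?_))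
  · have h1 : 0 ≤ ((w a b : ℚ) : ℝ) + A.1 a b ∧ ((w a b : ℚ) : ℝ) + A.1 a b < 1 := hwR a b
    have h2 := hzR a b
    push_cast
    rw [abs_lt]
    constructor <;> linarith
  · have h1 : ‖((w a b : ℚ) : ℚ_[p i]) + A.2 i a b‖ ≤ 1 := hwP i a b
    have h2 := hzP a b i
    have h3 : ((w a b - z a b : ℚ) : ℚ_[p i]) =
        (((w a b : ℚ) : ℚ_[p i]) + A.2 i a b) + -((z a b : ℚ_[p i]) + A.2 i a b) := by
      push_cast; ring
    rw [h3]
    exact (Padic.nonarchimedean _ _).trans (max_le h1 (by rwa [norm_neg]))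

end Lattices

section LocalVolumes

theorem padic_exists_normalized_haar (p : ℕ) [Fact p.Prime] [MeasurableSpace ℚ_[p]]
    [BorelSpace ℚ_[p]] : ∃ μ : Measure ℚ_[p], μ.IsAddHaarMeasure ∧ μ {x | ‖x‖ ≤ 1} = 1 := by
  let K : TopologicalSpace.PositiveCompacts ℚ_[p] :=
    { carrier := Metric.closedBall 0 1
      isCompact' := isCompact_closedBall _ _
      interior_nonempty' := ⟨0, Metric.ball_subset_interior_closedBall (by simp)⟩ }
  refine ⟨Measure.addHaarMeasure K, inferInstance, ?_⟩
  have h : {x : ℚ_[p] | ‖x‖ ≤ 1} = K := by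
    ext x; exact mem_closedBall_zero_iff.symm
  rw [h, Measure.addHaarMeasure_self]

theorem padic_exists_norm_pi_eq_zpow {p n : ℕ} [Fact p.Prime] {y : Fin n → ℚ_[p]} (hy : y ≠ 0) :
    ∃ k : ℤ, ‖y‖ = (p : ℝ) ^ k := by
  obtain ⟨j₀, hj₀⟩ := Function.ne_iff.1 hy
  have : Nonempty (Fin n) := ⟨j₀⟩
  obtain ⟨j, hj⟩ := Finite.exists_max fun j => ‖y j‖
  have hnorm : ‖y‖ = ‖y j‖ := le_antisymm ((pi_norm_le_iff_of_nonneg (norm_nonneg _)).2 hj)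
    (norm_le_pi_norm y j)
  have hyj : y j ≠ 0 := norm_pos_iff.1 ((norm_pos_iff.2 hj₀).trans_le (hj j₀))
  exact ⟨_, hnorm.trans (Padic.norm_eq_zpow_neg_valuation hyj)⟩

theorem padic_measure_pi_norm_pow_le {p m : ℕ} [Fact p.Prime] [MeasurableSpace ℚ_[p]]
    [BorelSpace ℚ_[p]] (hm : 0 < m) (μ : Measure ℚ_[p]) [μ.IsAddHaarMeasure]
    (hμ : μ {x | ‖x‖ ≤ 1} = 1) {c : ℝ} (hc : c ≤ 1) {l : ℤ} (hl : c = (p : ℝ) ^ (m * l : ℤ)) :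
    Measure.pi (fun _ : Fin m => μ) {x | ‖x‖ ^ m ≤ c} ≤ ENNReal.ofReal c := by
  have hp : (1 : ℝ) < p := by exact_mod_cast (Fact.out : p.Prime).one_lt
  have hp0 : (0 : ℝ) < p := zero_lt_one.trans hp
  have hl0 : l ≤ 0 := by
    by_contra! h
    have : (1 : ℝ) < (p : ℝ) ^ (m * l : ℤ) := one_lt_zpow₀ hp (by positivity)
    linarith
  obtain ⟨k, rfl⟩ : ∃ k : ℕ, l = -k := ⟨(-l).toNat, by omega⟩
  have hck : c = (((p : ℝ) ^ k)⁻¹) ^ m := by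
    rw [hl, mul_comm, _root_.zpow_mul, _root_.zpow_neg, zpow_natCast, zpow_natCast]
  have hsub : {x : Fin m → ℚ_[p] | ‖x‖ ^ m ≤ c} ⊆
      Set.univ.pi fun _ => {x : ℚ_[p] | ‖x‖ ≤ (p : ℝ) ^ (-k : ℤ)} := by
    intro x hx a _
    simp only [Set.mem_ofPred_eq] at hx ⊢
    rw [hck] at hx
    have := (pow_le_pow_iff_left₀ (norm_nonneg x) (by positivity) hm.ne').1 hx
    rw [_root_.zpow_neg, zpow_natCast]
    exact (norm_le_pi_norm x a).trans this
  have hball := padic_measure_closedBall_mul_le μ k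
  rw [hμ, ← ENNReal.le_inv_iff_mul_le] at hball
  calc Measure.pi (fun _ : Fin m => μ) {x | ‖x‖ ^ m ≤ c}
      ≤ (μ {x | ‖x‖ ≤ (p : ℝ) ^ (-k : ℤ)}) ^ m := by
        refine (measure_mono hsub).trans_eq ?_
        rw [Measure.pi_pi]; simp
    _ ≤ (((p : ENNReal) ^ k)⁻¹) ^ m := by gcongr
    _ = ENNReal.ofReal c := by
        rw [hck, ENNReal.ofReal_pow (by positivity), ENNReal.ofReal_inv_of_pos (by positivity),
          ENNReal.ofReal_pow (by positivity), ENNReal.ofReal_natCast]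

theorem real_volume_pi_norm_pow_le {m : ℕ} (hm : 0 < m) {c : ℝ} (hc : 0 ≤ c) :
    volume {x : Fin m → ℝ | ‖x‖ ^ m ≤ c} ≤ 2 ^ m * ENNReal.ofReal c := by
  set r : ℝ := c ^ (1 / m : ℝ) with hr
  have hr0 : 0 ≤ r := Real.rpow_nonneg hc _
  have hrm : r ^ m = c := by
    rw [hr, one_div]; exact Real.rpow_inv_natCast_pow hc hm.ne'
  have hsub : {x : Fin m → ℝ | ‖x‖ ^ m ≤ c} ⊆ Metric.closedBall 0 r := by
    intro x hx
    rw [Set.mem_ofPred_eq, ← hrm] at hx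
    simpa using (pow_le_pow_iff_left₀ (norm_nonneg x) hr0 hm.ne').1 hx
  refine (measure_mono hsub).trans_eq ?_
  rw [Real.volume_pi_closedBall _ hr0, Fintype.card_fin, mul_pow, hrm,
    ENNReal.ofReal_mul (by positivity), ENNReal.ofReal_pow (by norm_num)]
  simp

end LocalVolumes

section BadSets

variable {s : ℕ} {p : Fin s → ℕ} [∀ i, Fact (p i).Prime]

/-- The homomorphism `A ↦ A q` from `Mat_{m,n}(ℚ_S)` to `ℚ_S^m` for a rational vector `q`. -/
noncomputable def mulVecRat (p : Fin s → ℕ) [∀ i, Fact (p i).Prime] (m : ℕ) {n : ℕ}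
    (q : Fin n → ℚ) : (Fin m → Fin n → ℝ) × (∀ i, Fin m → Fin n → ℚ_[p i]) →+
      (Fin m → ℝ) × (∀ i, Fin m → ℚ_[p i]) where
  toFun A := (fun a => ∑ b, A.1 a b * (q b : ℝ), fun i a => ∑ b, A.2 i a b * (q b : ℚ_[p i]))
  map_zero' := by ext <;> simp
  map_add' A B := by ext <;> simp [add_mul, Finset.sum_add_distrib]

theorem mulVecRat_surjective (m : ℕ) {n : ℕ} {q : Fin n → ℚ} (hq : q ≠ 0) :
    Function.Surjective (mulVecRat p m q) := by
  obtain ⟨b₀, hb₀⟩ := Function.ne_iff.1 hq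
  have hb : q b₀ ≠ 0 := hb₀
  intro h
  refine ⟨(fun a => Pi.single b₀ (h.1 a / q b₀), fun i a => Pi.single b₀ (h.2 i a / q b₀)), ?_⟩
  refine Prod.ext (funext fun a => ?_) (funext fun i => funext fun a => ?_)
  · have hb' : (q b₀ : ℝ) ≠ 0 := Rat.cast_ne_zero.2 hb
    simp [mulVecRat, Pi.single_apply, hb']
  · have hb' : (q b₀ : ℚ_[p i]) ≠ 0 := Rat.cast_ne_zero.2 hb
    simp [mulVecRat, Pi.single_apply, hb']

theorem mulVecRat_mem_range_diagVec (m : ℕ) {n : ℕ} {q : Fin n → ℚ}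
    (hq : ∀ j, IsZS (∏ i, p i) (q j)) :
    ∀ A ∈ (diagMat p m n).range, mulVecRat p m q A ∈ (diagVec p m).range := by
  rintro _ ⟨z, rfl⟩
  refine ⟨fun a => ∑ b, z a b * ⟨q b, hq b⟩, ?_⟩
  refine Prod.ext (funext fun a => ?_) (funext fun i => funext fun a => ?_)
  · simp [diagVec, diagMat, mulVecRat]
  · simp [diagVec, diagMat, mulVecRat]

variable [∀ i, MeasurableSpace ℚ_[p i]] [∀ i, BorelSpace ℚ_[p i]]

theorem measurable_mulVecRat (m : ℕ) {n : ℕ} (q : Fin n → ℚ) :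
    Measurable (mulVecRat p m q) := by
  refine Measurable.prodMk (measurable_pi_lambda _ fun a => ?_)
    (measurable_pi_lambda _ fun i => measurable_pi_lambda _ fun a => ?_)
  · exact Finset.measurable_sum _ fun b _ => by fun_prop
  · have h : ∀ b, Measurable fun A : (Fin m → Fin n → ℝ) × (∀ i, Fin m → Fin n → ℚ_[p i]) =>
        A.2 i a b := fun b => by fun_prop
    exact Finset.measurable_sum _ fun b _ => (h b).mul_const _

/-- The volume of the set of matrices `A` for which `A q` lies in a given box modulo `ℤ_S^m` is
at most the volume of the box. -/
theorem measure_exists_norm_mulVec_add_le {m n : ℕ} (hm : 0 < m) (hpinj : Function.Injective p)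
    (ν : ∀ i, Measure (Fin m → Fin n → ℚ_[p i])) [∀ i, (ν i).IsAddHaarMeasure]
    (hν : ∀ i, ν i {A | ∀ a b, ‖A a b‖ ≤ 1} = 1)
    {q : Fin n → ℚ} (hq : ∀ j, IsZS (∏ i, p i) (q j)) (hq0 : q ≠ 0)
    {cR : ℝ} {cP : Fin s → ℝ} (hcR : 0 ≤ cR) (hcP : ∀ i, cP i ≤ 1)
    (hval : ∀ i, ∃ l : ℤ, cP i = (p i : ℝ) ^ (m * l : ℤ)) :
    ((volume : Measure (Fin m → Fin n → ℝ)).prod (Measure.pi ν))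
        {A : (Fin m → Fin n → ℝ) × (∀ i, Fin m → Fin n → ℚ_[p i]) |
          (∀ a b, 0 ≤ A.1 a b ∧ A.1 a b < 1) ∧ (∀ i a b, ‖A.2 i a b‖ ≤ 1) ∧
          ∃ pv : Fin m → ℚ, (∀ a, IsZS (∏ i, p i) (pv a)) ∧
            ‖fun a => (∑ b, A.1 a b * (q b : ℝ)) + (pv a : ℝ)‖ ^ m ≤ cR ∧
            ∀ i, ‖fun a => (∑ b, A.2 i a b * (q b : ℚ_[p i])) + (pv a : ℚ_[p i])‖ ^ m ≤ cP i}
      ≤ 2 ^ m * ENNReal.ofReal (cR * ∏ i, cP i) := by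
  choose lam hlam hlam1 using fun i => padic_exists_normalized_haar (p i)
  choose l hl using hval
  let ρ : ∀ i, Measure (Fin m → ℚ_[p i]) := fun i => Measure.pi fun _ => lam i
  let B : Set ((Fin m → ℝ) × (∀ i, Fin m → ℚ_[p i])) :=
    {x | ‖x‖ ^ m ≤ cR} ×ˢ Set.univ.pi fun i => {x | ‖x‖ ^ m ≤ cP i}
  have hBm : MeasurableSet B :=
    (isClosed_le (by fun_prop) continuous_const).measurableSet.prod
      (MeasurableSet.univ_pi fun i => (isClosed_le (by fun_prop) continuous_const).measurableSet)
  have hBneg : ∀ h ∈ B, -h ∈ B := by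
    rintro h ⟨h1, h2⟩
    refine ⟨?_, fun i hi => ?_⟩
    · simpa using h1
    · simpa using h2 i hi
  have hρ : ∀ i, ρ i {y | ∀ j, ‖y j‖ ≤ 1} = 1 := by
    intro i
    have : {y : Fin m → ℚ_[p i] | ∀ j, ‖y j‖ ≤ 1} = Set.univ.pi fun _ => {x | ‖x‖ ≤ 1} := by
      ext; simp
    rw [this, Measure.pi_pi]
    simp [hlam1]
  have hσν : ∀ i, SigmaFinite (ν i) := fun i => inferInstance
  have hσρ : ∀ i, SigmaFinite (ρ i) := fun i => inferInstance
  have hpν : (Measure.pi ν).IsAddLeftInvariant := Measure.pi.isAddLeftInvariant _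
  have hpρ : (Measure.pi ρ).IsAddLeftInvariant := Measure.pi.isAddLeftInvariant _
  have hMν : ((volume : Measure (Fin m → Fin n → ℝ)).prod (Measure.pi ν)).IsAddLeftInvariant :=
    Measure.prod.instIsAddLeftInvariant
  have hMρ : ((volume : Measure (Fin m → ℝ)).prod (Measure.pi ρ)).IsAddLeftInvariant :=
    Measure.prod.instIsAddLeftInvariant
  have hmain := measure_inter_preimage_mul_le
    (μ := (volume : Measure (Fin m → Fin n → ℝ)).prod (Measure.pi ν))
    (ν := (volume : Measure (Fin m → ℝ)).prod (Measure.pi ρ))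
    (Γ := (diagVec p m).range) (isAddFundamentalDomain_boxMat hpinj m n _)
    (measurableSet_boxVec m 0) hBm hBneg
    (fun x hx y hy ⟨z, hz⟩ => sub_eq_zero.1 (by
      rw [← hz, diagVec_eq_of_mem_boxVec hx hy hz, map_zero]))
    (mulVecRat p m q) (measurable_mulVecRat m q) (mulVecRat_surjective m hq0)
    (mulVecRat_mem_range_diagVec m hq)
  rw [measure_boxVec _ ρ hρ, measure_boxMat ν hν, mul_one, one_mul] at hmain
  refine (measure_mono ?_).trans (hmain.trans ?_)
  · rintro A ⟨hA1, hA2, pv, hpv, hR, hP⟩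
    refine ⟨⟨hA1, hA2⟩, -diagVec p m fun a => ⟨pv a, hpv a⟩, neg_mem ⟨_, rfl⟩, ?_⟩
    rw [sub_neg_eq_add]
    exact ⟨hR, fun i _ => hP i⟩
  · have hcP0 : ∀ i, 0 ≤ cP i := fun i => by rw [hl i]; positivity
    rw [Measure.prod_prod, Measure.pi_pi, ENNReal.ofReal_mul hcR,
      ENNReal.ofReal_prod_of_nonneg fun i _ => hcP0 i, ← mul_assoc]
    gcongr with i
    · exact real_volume_pi_norm_pow_le hm hcR
    · exact padic_measure_pi_norm_pow_le hm (lam i) (hlam1 i) (hcP i) (hl i)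

end BadSets

section LatticeSum

/-- A function that is non-increasing on positive reals and equal to one on `(-∞, 1]` is
non-increasing even up to replacing its arguments below one by one. -/
theorem le_of_le_max_one {f : ℝ → ℝ} (hanti : ∀ ⦃t₁ t₂ : ℝ⦄, 0 < t₁ → t₁ ≤ t₂ → f t₂ ≤ f t₁)
    (hone : ∀ ⦃t : ℝ⦄, t ≤ 1 → f t = 1) {t u : ℝ} (h : t ≤ max u 1) : f u ≤ f t := by
  rcases le_or_gt t 1 with ht | ht
  · rw [hone ht]
    rcases le_or_gt u 1 with hu | hu
    · exact (hone hu).le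
    · exact (hanti one_pos hu.le).trans (hone le_rfl).le
  · exact hanti (one_pos.trans ht) ((le_max_iff.1 h).resolve_right ht.not_ge)

theorem pow_le_max_pow_one {a b : ℝ} (ha : 0 ≤ a) (h : a ≤ max b 1) (n : ℕ) :
    a ^ n ≤ max (b ^ n) 1 := by
  rcases le_max_iff.1 h with h | h
  · exact le_max_of_le_left (pow_le_pow_left₀ ha h n)
  · exact le_max_of_le_right (pow_le_one₀ ha h)

variable {s : ℕ} {p : Fin s → ℕ} [∀ i, Fact (p i).Prime]

/-- The product `∏_{p ∈ S} ψ_p(‖y‖_p^n)`. -/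
noncomputable def ApproxFamily.prodAt {m n : ℕ} (ψ : ApproxFamily m n s p)
    (y : (Fin n → ℝ) × (∀ i, Fin n → ℚ_[p i])) : ℝ :=
  ψ.psiR (‖y.1‖ ^ n) * ∏ i, ψ.psiP i (‖y.2 i‖ ^ n)

theorem ApproxFamily.prodAt_le {m n : ℕ} (ψ : ApproxFamily m n s p)
    {x y : (Fin n → ℝ) × (∀ i, Fin n → ℚ_[p i])} (hR : ‖y.1‖ ≤ max ‖x.1‖ 1)
    (hP : ∀ i, ‖y.2 i‖ ≤ max ‖x.2 i‖ 1) : ψ.prodAt x ≤ ψ.prodAt y := by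
  unfold ApproxFamily.prodAt
  refine mul_le_mul ?_ (Finset.prod_le_prod (fun i _ => (ψ.posP i _).le) fun i _ => ?_)
    (Finset.prod_nonneg fun i _ => (ψ.posP i _).le) (ψ.posR _).le
  · exact le_of_le_max_one ψ.antiR ψ.oneR (pow_le_max_pow_one (norm_nonneg _) hR n)
  · exact le_of_le_max_one (ψ.antiP i) (ψ.oneP i) (pow_le_max_pow_one (norm_nonneg _) (hP i) n)

/-- The lower corner of the unit cube which is `[-1, 0)` in the coordinates from `e` and `[0, 1)` in
the others. -/
def cornerShift {n : ℕ} (e : Finset (Fin n)) (j : Fin n) : ℝ := if j ∈ e then -1 else 0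

/-- Each point admits an orthant such that `ψ` is bounded below by its value at the point on the
translated box pointing towards the origin. -/
theorem ApproxFamily.exists_prodAt_le_on_box {m n : ℕ} (ψ : ApproxFamily m n s p)
    (x : (Fin n → ℝ) × (∀ i, Fin n → ℚ_[p i])) :
    ∃ e : Finset (Fin n), ∀ y, y - x ∈ boxVec p n (cornerShift e) →
      ψ.prodAt x ≤ ψ.prodAt y := by
  classical
  refine ⟨Finset.univ.filter fun j => 0 < x.1 j, fun y hy => ψ.prodAt_le ?_ fun i => ?_⟩
  · refine (pi_norm_le_iff_of_nonneg (by positivity)).2 fun j => ?_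
    have hx : |x.1 j| ≤ ‖x.1‖ := norm_le_pi_norm x.1 j
    obtain ⟨h1, h2⟩ := hy.1 j
    simp only [cornerShift, Finset.mem_filter, Finset.mem_univ, true_and, Prod.fst_sub,
      Pi.sub_apply] at h1 h2
    rw [Real.norm_eq_abs, le_max_iff]
    split_ifs at h1 h2 with hpos
    · rw [abs_of_pos hpos] at hx
      rcases le_or_gt 0 (y.1 j) with h | h
      · exact Or.inl (by rw [abs_of_nonneg h]; linarith)
      · exact Or.inr (by rw [abs_of_neg h]; linarith)
    · rw [abs_of_nonpos (not_lt.1 hpos)] at hx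
      rcases le_or_gt 0 (y.1 j) with h | h
      · exact Or.inr (by rw [abs_of_nonneg h]; linarith)
      · exact Or.inl (by rw [abs_of_neg h]; linarith)
  · refine (pi_norm_le_iff_of_nonneg (by positivity)).2 fun j => ?_
    have h := Padic.nonarchimedean (x.2 i j) (y.2 i j - x.2 i j)
    rw [add_sub_cancel] at h
    exact h.trans (max_le_max (norm_le_pi_norm _ j) (hy.2 i j))

variable [∀ i, MeasurableSpace ℚ_[p i]] [∀ i, BorelSpace ℚ_[p i]]

/-- Comparison of the sum over `ℤ_S^n` with the integral over `ℚ_S^n`. -/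
theorem ApproxFamily.tsum_prodAt_le {m n : ℕ} (ψ : ApproxFamily m n s p)
    (μ : ∀ i, Measure (Fin n → ℚ_[p i])) [∀ i, (μ i).IsAddHaarMeasure]
    (hμ : ∀ i, μ i {y | ∀ j, ‖y j‖ ≤ 1} = 1) :
    ∑' z : Fin n → sIntegers p, ENNReal.ofReal (ψ.prodAt (diagVec p n z)) ≤
      2 ^ n * ∫⁻ y, ENNReal.ofReal (ψ.prodAt y)
        ∂((volume : Measure (Fin n → ℝ)).prod (Measure.pi μ)) := by
  set M := (volume : Measure (Fin n → ℝ)).prod (Measure.pi μ) with hM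
  have hσμ : ∀ i, SigmaFinite (μ i) := fun i => inferInstance
  have hpμ : (Measure.pi μ).IsAddLeftInvariant := Measure.pi.isAddLeftInvariant _
  have hMμ : M.IsAddLeftInvariant := Measure.prod.instIsAddLeftInvariant
  let C : Finset (Fin n) → (Fin n → sIntegers p) → Set ((Fin n → ℝ) × (∀ i, Fin n → ℚ_[p i])) :=
    fun e z => (fun y => -diagVec p n z + y) ⁻¹' boxVec p n (cornerShift e)
  have hCm : ∀ e z, MeasurableSet (C e z) := fun e z =>
    measurable_const_add _ (measurableSet_boxVec n _)
  have hC1 : ∀ e z, M (C e z) = 1 := fun e z => by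
    rw [measure_preimage_add, hM, measure_boxVec _ μ hμ]
  have hpoint : ∀ z, ENNReal.ofReal (ψ.prodAt (diagVec p n z)) ≤
      ∑ e, ∫⁻ y in C e z, ENNReal.ofReal (ψ.prodAt y) ∂M := by
    intro z
    obtain ⟨e, he⟩ := ψ.exists_prodAt_le_on_box (diagVec p n z)
    refine le_trans ?_ (Finset.single_le_sum
      (f := fun e => ∫⁻ y in C e z, ENNReal.ofReal (ψ.prodAt y) ∂M) (fun _ _ => zero_le)
      (Finset.mem_univ e))
    calc ENNReal.ofReal (ψ.prodAt (diagVec p n z))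
        = ∫⁻ _ in C e z, ENNReal.ofReal (ψ.prodAt (diagVec p n z)) ∂M := by simp [hC1]
      _ ≤ _ := by
        refine setLIntegral_mono' (hCm e z) fun y hy => ENNReal.ofReal_le_ofReal (he y ?_)
        rw [sub_eq_neg_add]
        exact hy
  calc ∑' z, ENNReal.ofReal (ψ.prodAt (diagVec p n z))
      ≤ ∑' z, ∑ e, ∫⁻ y in C e z, ENNReal.ofReal (ψ.prodAt y) ∂M := ENNReal.tsum_le_tsum hpoint
    _ = ∑ e, ∑' z, ∫⁻ y in C e z, ENNReal.ofReal (ψ.prodAt y) ∂M :=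
        Summable.tsum_finsetSum fun _ _ => ENNReal.summable
    _ ≤ ∑ _e : Finset (Fin n), ∫⁻ y, ENNReal.ofReal (ψ.prodAt y) ∂M := by
        refine Finset.sum_le_sum fun e _ => ?_
        rw [← lintegral_iUnion (hCm e)]
        · exact setLIntegral_le_lintegral _ _
        · intro z w hzw
          refine Set.disjoint_left.2 fun y hy hy' => hzw (sub_eq_zero.1 ?_).symm
          refine diagVec_eq_of_mem_boxVec hy hy' ?_
          rw [map_sub, add_sub_add_right_eq_sub, neg_sub_neg]
    _ = 2 ^ n * ∫⁻ y, ENNReal.ofReal (ψ.prodAt y) ∂M := by simp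

end LatticeSum

/-- **Summability of the bad-set volumes under convergence of the integral.**
If `∫_{ℚ_S^n} ∏_p ψ_p(‖y‖_p^n) dy < ∞`, then
`∑_{q ∈ ℤ_S^n ∖ {0}} vol(𝒜_q) < ∞`, where `𝒜_q` is the set of
`A ∈ Mat_{m,n}([0,1) × ∏_p ℤ_p)` for which there exists `p⃗ ∈ ℤ_S^m` with
`‖A_p q + p⃗‖_p^m ≤ ψ_p(‖q‖_p^n)` at every place `p ∈ S`. -/
theorem summable_bad_set_volumes
    (m n : ℕ) (hm : 0 < m) (hn : 0 < n)
    (s : ℕ) (p : Fin s → ℕ) [∀ i, Fact (p i).Prime] (hpinj : Function.Injective p)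
    [∀ i, MeasurableSpace ℚ_[p i]] [∀ i, BorelSpace ℚ_[p i]]
    (ψ : ApproxFamily m n s p)
    -- Haar measure on `ℚ_S^n`, normalized so that `ℤ_p^n` has measure one at each
    -- finite place:
    (μ : ∀ i, Measure (Fin n → ℚ_[p i])) [∀ i, (μ i).IsAddHaarMeasure]
    (hμ : ∀ i, μ i {y | ∀ j, ‖y j‖ ≤ 1} = 1)
    -- Haar measure on `Mat_{m,n}(ℚ_S)`, normalized likewise:
    (ν : ∀ i, Measure (Fin m → Fin n → ℚ_[p i])) [∀ i, (ν i).IsAddHaarMeasure]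
    (hν : ∀ i, ν i {A | ∀ a b, ‖A a b‖ ≤ 1} = 1)
    -- convergence of the integral `∫_{ℚ_S^n} ∏_p ψ_p(‖y‖_p^n) dy`:
    (hint : ∫⁻ y : (Fin n → ℝ) × (∀ i, Fin n → ℚ_[p i]),
        ENNReal.ofReal (ψ.psiR (‖y.1‖ ^ n) * ∏ i, ψ.psiP i (‖y.2 i‖ ^ n))
        ∂((volume : Measure (Fin n → ℝ)).prod (Measure.pi μ)) < ⊤) :
    ∑' q : {q : Fin n → ℚ // (∀ j, IsZS (∏ i, p i) (q j)) ∧ q ≠ 0},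
      ((volume : Measure (Fin m → Fin n → ℝ)).prod (Measure.pi ν))
        {A : (Fin m → Fin n → ℝ) × (∀ i, Fin m → Fin n → ℚ_[p i]) |
          (∀ a b, 0 ≤ A.1 a b ∧ A.1 a b < 1) ∧ (∀ i a b, ‖A.2 i a b‖ ≤ 1) ∧
          ∃ pv : Fin m → ℚ, (∀ a, IsZS (∏ i, p i) (pv a)) ∧
            ‖fun a => (∑ b, A.1 a b * ((q : Fin n → ℚ) b : ℝ)) + (pv a : ℝ)‖ ^ m
              ≤ ψ.psiR (‖ratR (q : Fin n → ℚ)‖ ^ n) ∧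
            ∀ i, ‖fun a => (∑ b, A.2 i a b * (((q : Fin n → ℚ) b : ℚ) : ℚ_[p i]))
                + ((pv a : ℚ) : ℚ_[p i])‖ ^ m
              ≤ ψ.psiP i (‖ratP p i (q : Fin n → ℚ)‖ ^ n)}
      < ⊤ := by
  have hterm : ∀ q : {q : Fin n → ℚ // (∀ j, IsZS (∏ i, p i) (q j)) ∧ q ≠ 0}, _ ≤ _ := fun q =>
    measure_exists_norm_mulVec_add_le hm hpinj ν hν q.2.1 q.2.2
      (cR := ψ.psiR (‖ratR (q : Fin n → ℚ)‖ ^ n))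
      (cP := fun i => ψ.psiP i (‖ratP p i (q : Fin n → ℚ)‖ ^ n)) (ψ.posR _).le
      (fun i => (le_of_le_max_one (ψ.antiP i) (ψ.oneP i)
        (le_max_right _ _)).trans (ψ.oneP i le_rfl).le)
      (fun i => by
        have hne : ratP p i (q : Fin n → ℚ) ≠ 0 := fun h => q.2.2 (funext fun j =>
          Rat.cast_eq_zero.1 (congrFun h j))
        obtain ⟨k, hk⟩ := padic_exists_norm_pi_eq_zpow hne
        rw [hk, ← zpow_natCast, ← _root_.zpow_mul]
        exact ψ.valsP i _)
  refine (ENNReal.tsum_le_tsum hterm).trans_lt ?_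
  rw [ENNReal.tsum_mul_left]
  let ι : {q : Fin n → ℚ // (∀ j, IsZS (∏ i, p i) (q j)) ∧ q ≠ 0} → Fin n → sIntegers p :=
    fun q j => ⟨q.1 j, q.2.1 j⟩
  have hι : Function.Injective ι := fun q r h =>
    Subtype.ext (funext fun j => congrArg Subtype.val (congrFun h j))
  refine ENNReal.mul_lt_top (by simp) ?_
  refine (ENNReal.tsum_comp_le_tsum_of_injective hι
    fun z => ENNReal.ofReal (ψ.prodAt (diagVec p n z))).trans_lt ?_
  exact (ψ.tsum_prodAt_le μ hμ).trans_lt (ENNReal.mul_lt_top (by simp) hint)
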